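/- Let (N,V) be a triangle-free instance of 3D-SR-SAS-BIN. If (N,V) contains a repairable P-matching, then (N,V) contains a stable P-matching. -/

import Mathlib

open Finset

variable {A : Type*}

/-- `M` is a matching on agent set `N`: a set of pairwise disjoint triples of agents of `N`. -/
def IsMatching [DecidableEq A] (N : Finset A) (M : Finset (Finset A)) : Prop :=
  (∀ t ∈ M, t.card = 3 ∧ t ⊆ N) ∧ ∀ t ∈ M, ∀ s ∈ M, t ≠ s → Disjoint t s

/-- The (additively separable) utility of agent `a` in matching `M` under valuations `val`:
the sum, over the triples of `M` containing `a`, of the valuations by `a` of the other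
members; this is `0` if `a` is unmatched, and for a genuine matching it is the sum of the
valuations of `a`'s two partners. -/
def utility [DecidableEq A] (val : A → A → ℤ) (M : Finset (Finset A)) (a : A) : ℤ :=
  ∑ t ∈ M.filter (fun t => a ∈ t), ∑ b ∈ t.erase a, val a b

/-- The triple consisting of the three distinct agents `x, y, z` of `N` blocks `M`. -/
def Blocks [DecidableEq A] (N : Finset A) (val : A → A → ℤ) (M : Finset (Finset A))
    (x y z : A) : Prop :=
  x ∈ N ∧ y ∈ N ∧ z ∈ N ∧ x ≠ y ∧ x ≠ z ∧ y ≠ z ∧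
  utility val M x < val x y + val x z ∧
  utility val M y < val y x + val y z ∧
  utility val M z < val z x + val z y

/-- `M` is stable: no triple of agents of `N` blocks it. -/
def IsStable [DecidableEq A] (N : Finset A) (val : A → A → ℤ) (M : Finset (Finset A)) : Prop :=
  ∀ x y z : A, ¬ Blocks N val M x y z

/-- Binary symmetric preferences on `N`. -/
def BinSym [DecidableEq A] (N : Finset A) (val : A → A → ℤ) : Prop :=
  (∀ a ∈ N, ∀ b ∈ N, a ≠ b → val a b = 0 ∨ val a b = 1) ∧
  (∀ a ∈ N, ∀ b ∈ N, val a b = val b a)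

/-- A `P`-matching: a matching in which every matched agent has strictly positive utility. -/
def IsPMatching [DecidableEq A] (N : Finset A) (val : A → A → ℤ)
    (M : Finset (Finset A)) : Prop :=
  IsMatching N M ∧ ∀ a : A, (∃ t ∈ M, a ∈ t) → 0 < utility val M a

/-- `x, y, z` form a triangle: three distinct agents of `N` whose pairwise valuations
all equal `1`. -/
def IsTriangle [DecidableEq A] (N : Finset A) (val : A → A → ℤ) (x y z : A) : Prop :=
  x ∈ N ∧ y ∈ N ∧ z ∈ N ∧ x ≠ y ∧ x ≠ z ∧ y ≠ z ∧
  val x y = 1 ∧ val y z = 1 ∧ val x z = 1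

/-- The instance contains no triangle. -/
def TriangleFree [DecidableEq A] (N : Finset A) (val : A → A → ℤ) : Prop :=
  ∀ x y z : A, ¬ IsTriangle N val x y z

/-- `M` is a repairable `P`-matching: it is not stable, and there is an agent `i` of
utility `0` such that every blocking triple has the form `{i, j₁, j₂}` with
`u_{j₁}(M) = 1`, `u_{j₂}(M) = 0`, `val i j₁ = 1` and `val j₁ j₂ = 1`. -/
def Repairable [DecidableEq A] (N : Finset A) (val : A → A → ℤ)
    (M : Finset (Finset A)) : Prop :=
  ¬ IsStable N val M ∧
  ∃ i ∈ N, utility val M i = 0 ∧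
    ∀ x y z : A, Blocks N val M x y z →
      ∃ j1 j2 : A, ({x, y, z} : Finset A) = {i, j1, j2} ∧
        utility val M j1 = 1 ∧ utility val M j2 = 0 ∧ val i j1 = 1 ∧ val j1 j2 = 1

/-- Two distinct agents of `N` that value each other at `1`. -/
def Likes (N : Finset A) (val : A → A → ℤ) (a b : A) : Prop :=
  a ∈ N ∧ b ∈ N ∧ a ≠ b ∧ val a b = 1 ∧ val b a = 1

/-- `a, b, c` is a path centred at `b` in the graph of mutual likes, and its ends do not like
each other. -/
def IsPath3 (N : Finset A) (val : A → A → ℤ) (a b c : A) : Prop :=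
  Likes N val a b ∧ Likes N val b c ∧ a ≠ c ∧ val a c = 0 ∧ val c a = 0

lemma Likes.symm {N : Finset A} {val : A → A → ℤ} {a b : A}
    (h : Likes N val a b) : Likes N val b a :=
  ⟨h.2.1, h.1, h.2.2.1.symm, h.2.2.2.2, h.2.2.2.1⟩

lemma IsPath3.symm {N : Finset A} {val : A → A → ℤ} {a b c : A}
    (h : IsPath3 N val a b c) : IsPath3 N val c b a :=
  ⟨h.2.1.symm, h.1.symm, h.2.2.1.symm, h.2.2.2.2, h.2.2.2.1⟩

section

variable [DecidableEq A] {N : Finset A} {val : A → A → ℤ} {M : Finset (Finset A)}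

lemma likes_of_val (hbs : BinSym N val) {a b : A} (ha : a ∈ N) (hb : b ∈ N) (hab : a ≠ b)
    (h : val a b = 1) : Likes N val a b :=
  ⟨ha, hb, hab, h, by rw [← hbs.2 a ha b hb, h]⟩

lemma TriangleFree.isPath3 (hbs : BinSym N val) (htf : TriangleFree N val) {a b c : A}
    (hab : Likes N val a b) (hbc : Likes N val b c) (hac : a ≠ c) : IsPath3 N val a b c := by
  have h0 : val a c = 0 := by
    rcases hbs.1 a hab.1 c hbc.2.1 hac with h | h
    · exact h
    · exact absurd ⟨hab.1, hab.2.1, hbc.2.1, hab.2.2.1, hac, hbc.2.2.1, hab.2.2.2.1,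
        hbc.2.2.2.1, h⟩ (htf a b c)
  exact ⟨hab, hbc, hac, h0, by rw [← hbs.2 a hab.1 c hbc.2.1, h0]⟩

lemma utility_of_unmatched {a : A} (h : ∀ t ∈ M, a ∉ t) : utility val M a = 0 := by
  rw [utility, filter_false_of_mem h, sum_empty]

lemma IsMatching.utility_of_mem (hM : IsMatching N M) {t : Finset A} (ht : t ∈ M) {a : A}
    (ha : a ∈ t) : utility val M a = ∑ b ∈ t.erase a, val a b := by
  have : M.filter (fun s => a ∈ s) = {t} := by
    ext s
    simp only [mem_filter, mem_singleton]
    refine ⟨fun ⟨hs, has⟩ => ?_, fun h => h ▸ ⟨ht, ha⟩⟩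
    by_contra hne
    exact disjoint_left.1 (hM.2 s hs t ht hne) has ha
  rw [utility, this, sum_singleton]

lemma IsMatching.utility_left (hM : IsMatching N M) {a b c : A} (hab : a ≠ b) (hac : a ≠ c)
    (hbc : b ≠ c) (ht : {a, b, c} ∈ M) : utility val M a = val a b + val a c := by
  rw [hM.utility_of_mem ht (by simp), erase_insert (by simp [hab, hac]), sum_pair hbc]

lemma IsMatching.utility_of_isPath3 (hM : IsMatching N M) {a b c : A}
    (hp : IsPath3 N val a b c) (ht : {a, b, c} ∈ M) :
    utility val M a = 1 ∧ utility val M b = 2 ∧ utility val M c = 1 := by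
  obtain ⟨⟨-, -, hab, h1, h2⟩, ⟨-, -, hbc, h3, h4⟩, hac, h5, h6⟩ := hp
  refine ⟨?_, ?_, ?_⟩
  · rw [hM.utility_left hab hac hbc ht, h1, h5]; rfl
  · rw [hM.utility_left hab.symm hbc hac (by rwa [insert_comm]), h2, h3]; rfl
  · rw [hM.utility_left hac.symm hbc.symm hab
      (by rwa [show ({c, a, b} : Finset A) = {a, b, c} by ext; simp; tauto]), h6, h4]; rfl

lemma IsPMatching.unmatched (hM : IsPMatching N val M) {a : A} (h : utility val M a = 0) :
    ∀ t ∈ M, a ∉ t := by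
  intro t ht hat
  have := hM.2 a ⟨t, ht, hat⟩
  omega

lemma IsPMatching.utility_nonneg (hM : IsPMatching N val M) (a : A) :
    0 ≤ utility val M a := by
  by_cases h : ∃ t ∈ M, a ∈ t
  · exact (hM.2 a h).le
  · push Not at h
    exact (utility_of_unmatched h).ge

/-- An agent of utility `1` in a `P`-matching is an end of the path formed by its triple. -/
lemma IsPMatching.exists_isPath3 (hbs : BinSym N val) (htf : TriangleFree N val)
    (hM : IsPMatching N val M) {a : A} (h : utility val M a = 1) :
    ∃ b c, IsPath3 N val a b c ∧ {a, b, c} ∈ M := by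
  obtain ⟨t, ht, hat⟩ : ∃ t ∈ M, a ∈ t := by
    by_contra! hn
    rw [utility_of_unmatched hn] at h
    omega
  obtain ⟨hcard, hsub⟩ := hM.1.1 t ht
  obtain ⟨p, q, hpq, hpair⟩ := card_eq_two.1
    (show (t.erase a).card = 2 by rw [card_erase_of_mem hat, hcard])
  obtain rfl : t = {a, p, q} := by rw [← hpair, insert_erase hat]
  have hap : a ≠ p := by rintro rfl; simp at hcard; have := card_le_two (a := a) (b := q); omega
  have haq : a ≠ q := by
    rintro rfl
    have := card_le_two (a := p) (b := a)
    simp at hcard; omega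
  have key : ∀ p q, a ≠ p → a ≠ q → p ≠ q → {a, p, q} ∈ M → {a, p, q} ⊆ N → val a p = 1 →
      ∃ b c, IsPath3 N val a b c ∧ {a, b, c} ∈ M := by
    intro p q hap haq hpq ht hsub hv
    have haN : a ∈ N := hsub (by simp)
    have hpN : p ∈ N := hsub (by simp)
    have hqN : q ∈ N := hsub (by simp)
    have h1 := hM.1.utility_left (val := val) hap haq hpq ht
    have ht' : {q, a, p} ∈ M := by
      rwa [show ({q, a, p} : Finset A) = {a, p, q} by ext; simp; tauto]
    have h2 := hM.1.utility_left (val := val) haq.symm hpq.symm hap ht'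
    have h3 := hM.2 q ⟨_, ht, by simp⟩
    have h4 := hbs.2 a haN q hqN
    have h5 := hbs.1 q hqN p hpN hpq.symm
    have h6 := hbs.2 q hqN p hpN
    exact ⟨p, q, htf.isPath3 hbs (likes_of_val hbs haN hpN hap hv)
      (likes_of_val hbs hpN hqN hpq (by omega)) haq, ht⟩
  have hu := hM.1.utility_left (val := val) hap haq hpq ht
  rcases hbs.1 a (hsub (by simp)) p (hsub (by simp)) hap with h0 | h1
  · exact key q p haq hap hpq.symm (by rwa [pair_comm]) (by rwa [pair_comm]) (by omega)
  · exact key p q hap haq hpq ht hsub h1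

lemma IsPMatching.erase (hM : IsPMatching N val M) {t : Finset A} (ht : t ∈ M) :
    IsPMatching N val (M.erase t) ∧ (∀ v ∈ t, utility val (M.erase t) v = 0) ∧
      ∀ v ∉ t, utility val (M.erase t) v = utility val M v := by
  have hout : ∀ v ∉ t, utility val (M.erase t) v = utility val M v := by
    intro v hv
    rw [utility, utility]
    congr 1
    ext s
    simp only [mem_filter, mem_erase]
    grind
  have hin : ∀ v ∈ t, ∀ s ∈ M.erase t, v ∉ s := by
    intro v hv s hs hvs
    rw [mem_erase] at hs
    exact disjoint_left.1 (hM.1.2 s hs.2 t ht hs.1) hvs hv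
  refine ⟨⟨⟨fun s hs => hM.1.1 s (mem_of_mem_erase hs), fun s hs r hr =>
    hM.1.2 s (mem_of_mem_erase hs) r (mem_of_mem_erase hr)⟩, ?_⟩,
    fun v hv => utility_of_unmatched (hin v hv), hout⟩
  rintro v ⟨s, hs, hvs⟩
  rw [hout v fun hvt => hin v hvt s hs hvs]
  exact hM.2 v ⟨s, mem_of_mem_erase hs, hvs⟩

/-- A path of unmatched agents can be added to a `P`-matching. -/
lemma IsPMatching.insert (hM : IsPMatching N val M) {a b c : A} (hp : IsPath3 N val a b c)
    (ha : utility val M a = 0) (hb : utility val M b = 0) (hc : utility val M c = 0) :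
    IsPMatching N val (insert {a, b, c} M) ∧ utility val (insert {a, b, c} M) a = 1 ∧
      utility val (insert {a, b, c} M) b = 2 ∧ utility val (insert {a, b, c} M) c = 1 ∧
      ∀ v, v ≠ a → v ≠ b → v ≠ c →
        utility val (insert {a, b, c} M) v = utility val M v := by
  have hdisj : ∀ s ∈ M, Disjoint {a, b, c} s := by
    intro s hs
    simp [hM.unmatched ha s hs, hM.unmatched hb s hs, hM.unmatched hc s hs]
  have hmat : IsMatching N (Insert.insert {a, b, c} M) := by
    refine ⟨?_, ?_⟩
    · intro t ht
      rcases mem_insert.1 ht with rfl | ht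
      · refine ⟨card_eq_three.2 ⟨a, b, c, hp.1.2.2.1, hp.2.2.1, hp.2.1.2.2.1, rfl⟩, ?_⟩
        simp [insert_subset_iff, hp.1.1, hp.1.2.1, hp.2.1.2.1]
      · exact hM.1.1 t ht
    · intro t ht s hs hts
      rcases mem_insert.1 ht with rfl | ht <;> rcases mem_insert.1 hs with rfl | hs
      · exact absurd rfl hts
      · exact hdisj s hs
      · exact (hdisj t ht).symm
      · exact hM.1.2 t ht s hs hts
  obtain ⟨h1, h2, h3⟩ := hmat.utility_of_isPath3 hp (mem_insert_self _ _)
  have hout : ∀ v, v ≠ a → v ≠ b → v ≠ c →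
      utility val (Insert.insert {a, b, c} M) v = utility val M v := by
    intro v hva hvb hvc
    rw [utility, utility, filter_insert, if_neg (by simp [hva, hvb, hvc])]
  refine ⟨⟨hmat, ?_⟩, h1, h2, h3, hout⟩
  rintro v ⟨t, ht, hvt⟩
  by_cases hva : v = a
  · subst hva; omega
  by_cases hvb : v = b
  · subst hvb; omega
  by_cases hvc : v = c
  · subst hvc; omega
  rw [hout v hva hvb hvc]
  rcases mem_insert.1 ht with rfl | ht
  · simp [hva, hvb, hvc] at hvt
  · exact hM.2 v ⟨t, ht, hvt⟩

/-- In a triangle-free instance, a triple blocking a `P`-matching is a path whose ends are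
unmatched and whose centre has utility at most `1`. -/
lemma Blocks.exists_isPath3 (hbs : BinSym N val) (htf : TriangleFree N val)
    (hM : IsPMatching N val M) {x y z : A} (h : Blocks N val M x y z) :
    ∃ a b c, ({x, y, z} : Finset A) = {a, b, c} ∧ IsPath3 N val a b c ∧
      utility val M a = 0 ∧ utility val M c = 0 ∧ utility val M b ≤ 1 := by
  obtain ⟨hx, hy, hz, hxy, hxz, hyz, h1, h2, h3⟩ := h
  have ux := hM.utility_nonneg x
  have uy := hM.utility_nonneg y
  have uz := hM.utility_nonneg z
  have sxy := hbs.2 x hx y hy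
  have sxz := hbs.2 x hx z hz
  have syz := hbs.2 y hy z hz
  have hno := htf x y z
  rcases hbs.1 x hx y hy hxy with exy | exy <;> rcases hbs.1 x hx z hz hxz with exz | exz <;>
    rcases hbs.1 y hy z hz hyz with eyz | eyz <;> try omega
  · exact ⟨x, z, y, by rw [pair_comm], ⟨⟨hx, hz, hxz, exz, by omega⟩,
      ⟨hz, hy, hyz.symm, by omega, eyz⟩, hxy, exy, by omega⟩, by omega, by omega, by omega⟩
  · exact ⟨x, y, z, rfl, ⟨⟨hx, hy, hxy, by omega, by omega⟩,
      ⟨hy, hz, hyz, by omega, by omega⟩, hxz, exz, by omega⟩, by omega, by omega, by omega⟩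
  · exact ⟨y, x, z, by rw [insert_comm], ⟨⟨hy, hx, hxy.symm, by omega, by omega⟩,
      ⟨hx, hz, hxz, by omega, by omega⟩, hyz, eyz, by omega⟩, by omega, by omega, by omega⟩
  · exact absurd ⟨hx, hy, hz, hxy, hxz, hyz, exy, eyz, exz⟩ hno

/-- Every path with unmatched ends and a centre of utility at most `1` contains `i`. -/
def BlockedOnlyBy (N : Finset A) (val : A → A → ℤ) (M : Finset (Finset A)) (i : A) : Prop :=
  ∀ a b c, IsPath3 N val a b c → utility val M a = 0 → utility val M c = 0 →
    utility val M b ≤ 1 → i = a ∨ i = b ∨ i = c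

lemma isStable_of_forall_isPath3 (hbs : BinSym N val) (htf : TriangleFree N val)
    (hM : IsPMatching N val M)
    (h : ∀ a b c, IsPath3 N val a b c → utility val M a = 0 → utility val M c = 0 →
      2 ≤ utility val M b) : IsStable N val M := by
  intro x y z hb
  obtain ⟨a, b, c, -, hp, ha, hc, hb⟩ := hb.exists_isPath3 hbs htf hM
  have := h a b c hp ha hc
  omega

/-- If no agent loses and the only obstruction `i` of `M` gains, and moreover `i` is not the centre
of a path of unmatched agents or gets utility `2`, then the new matching is stable. -/
lemma IsPMatching.isStable_of_le (hbs : BinSym N val) (htf : TriangleFree N val)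
    {M' : Finset (Finset A)} {i : A} (hM : IsPMatching N val M)
    (hM' : IsPMatching N val M') (hi : BlockedOnlyBy N val M i)
    (hle : ∀ v, utility val M v ≤ utility val M' v) (hpos : 1 ≤ utility val M' i)
    (hcentre : (∀ a c, IsPath3 N val a i c → utility val M a = 0 → utility val M c = 0 → False) ∨
      2 ≤ utility val M' i) : IsStable N val M' := by
  refine isStable_of_forall_isPath3 hbs htf hM' fun a b c hp ha hc => ?_
  by_contra! hb
  have h1 := hM.utility_nonneg a
  have h2 := hM.utility_nonneg c
  have h3 := hle a
  have h4 := hle b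
  have h5 := hle c
  rcases hi a b c hp (by omega) (by omega) (by omega) with rfl | rfl | rfl
  · omega
  · rcases hcentre with h | h
    · exact h a c hp (by omega) (by omega)
    · omega
  · omega

/-- The agents of utility `2` that like some unmatched agent other than `i`. -/
noncomputable def likingCentres (N : Finset A) (val : A → A → ℤ) (M : Finset (Finset A))
    (i : A) : Finset A := by
  classical
  exact N.filter fun v => utility val M v = 2 ∧
    ∃ w, w ≠ i ∧ utility val M w = 0 ∧ Likes N val v w

lemma mem_likingCentres {i v : A} : v ∈ likingCentres N val M i ↔ v ∈ N ∧
    utility val M v = 2 ∧ ∃ w, w ≠ i ∧ utility val M w = 0 ∧ Likes N val v w := by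
  simp [likingCentres]

/-- Repair step: either a stable `P`-matching exists, or the obstruction can be moved along the
matching so that more centres like an unmatched agent. -/
lemma IsPMatching.repair_step (hbs : BinSym N val) (htf : TriangleFree N val) {i : A}
    (hM : IsPMatching N val M) (hui : utility val M i = 0)
    (hi : BlockedOnlyBy N val M i) :
    (∃ M', IsPMatching N val M' ∧ IsStable N val M') ∨
      ∃ M' i', IsPMatching N val M' ∧ utility val M' i' = 0 ∧ BlockedOnlyBy N val M' i' ∧
        likingCentres N val M i ⊂ likingCentres N val M' i' := by
  by_cases hst : IsStable N val M
  · exact .inl ⟨M, hM, hst⟩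
  by_cases hcen : ∃ a c, IsPath3 N val a i c ∧ utility val M a = 0 ∧ utility val M c = 0
  · obtain ⟨a, c, hp, ha, hc⟩ := hcen
    obtain ⟨hM', h1, h2, h3, h4⟩ := hM.insert hp ha hui hc
    refine .inl ⟨_, hM', hM.isStable_of_le hbs htf hM' hi (fun v => ?_) (by omega)
      (.inr (by omega))⟩
    by_cases h_a : v = a
    · subst h_a; omega
    by_cases h_i : v = i
    · subst h_i; omega
    by_cases h_c : v = c
    · subst h_c; omega
    exact (h4 v h_a h_i h_c).ge
  have hcen' : ∀ a c, IsPath3 N val a i c → utility val M a = 0 → utility val M c = 0 →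
      False := fun a c hp ha hc => hcen ⟨a, c, hp, ha, hc⟩
  obtain ⟨j, k, hp, huk, huj⟩ : ∃ j k, IsPath3 N val i j k ∧ utility val M k = 0 ∧
      utility val M j ≤ 1 := by
    by_contra! hno
    refine hst (isStable_of_forall_isPath3 hbs htf hM fun a b c hp ha hc => ?_)
    by_contra! hb
    rcases hi a b c hp ha hc (by omega) with rfl | rfl | rfl
    · have := hno b c hp hc; omega
    · exact hcen' a c hp ha hc
    · have := hno b a hp.symm ha; omega
  have huj0 := hM.utility_nonneg j
  obtain huj | huj : utility val M j = 0 ∨ utility val M j = 1 := by omega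
  · obtain ⟨hM', h1, h2, h3, h4⟩ := hM.insert hp hui huj huk
    refine .inl ⟨_, hM', hM.isStable_of_le hbs htf hM' hi (fun v => ?_) (by omega) (.inl hcen')⟩
    by_cases h_i : v = i
    · subst h_i; omega
    by_cases h_j : v = j
    · subst h_j; omega
    by_cases h_k : v = k
    · subst h_k; omega
    exact (h4 v h_i h_j h_k).ge
  obtain ⟨c, d, hq, ht⟩ := hM.exists_isPath3 hbs htf huj
  obtain ⟨-, huc, hud⟩ := hM.1.utility_of_isPath3 hq ht
  obtain ⟨hE, hE0, hE1⟩ := hM.erase ht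
  simp only [mem_insert, mem_singleton] at hE0 hE1
  have hij := hp.1.2.2.1
  have hjk := hp.2.1.2.2.1
  have hik := hp.2.2.1
  have hjc := hq.1.2.2.1
  have hcd := hq.2.1.2.2.1
  have hjd := hq.2.2.1
  have hic : i ≠ c := by rintro rfl; omega
  have hid : i ≠ d := by rintro rfl; omega
  have hkc : k ≠ c := by rintro rfl; omega
  have hkd : k ≠ d := by rintro rfl; omega
  have hpc : IsPath3 N val i j c := htf.isPath3 hbs hp.1 hq.1 hic
  have hkc' : IsPath3 N val k j c := htf.isPath3 hbs hp.2.1.symm hq.1 hkc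
  have hEi : utility val (M.erase {j, c, d}) i = 0 := by rw [hE1 i (by tauto), hui]
  have hEk : utility val (M.erase {j, c, d}) k = 0 := by rw [hE1 k (by tauto), huk]
  by_cases hA : ∃ a, Likes N val a c ∧ utility val M a = 0
  · obtain ⟨a, hac, hua⟩ := hA
    have hai : a ≠ i := by
      rintro rfl
      have h1 := hpc.2.2.2.1
      have h2 := hac.2.2.2.1
      omega
    have hak : a ≠ k := by
      rintro rfl
      have h1 := hkc'.2.2.2.1
      have h2 := hac.2.2.2.1
      omega
    have haj : a ≠ j := by rintro rfl; omega
    have had : a ≠ d := by rintro rfl; omega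
    have hac' := hac.2.2.1
    have hr : IsPath3 N val a c d := htf.isPath3 hbs hac hq.2.1 had
    obtain ⟨hF, hF1, hF2, hF3, hF4⟩ := hE.insert hp hEi (hE0 j (by tauto)) hEk
    obtain ⟨hG, hG1, hG2, hG3, hG4⟩ := hF.insert hr
      (by rw [hF4 a hai haj hak, hE1 a (by tauto), hua])
      (by rw [hF4 c hic.symm hjc.symm hkc.symm, hE0 c (by tauto)])
      (by rw [hF4 d hid.symm hjd.symm hkd.symm, hE0 d (by tauto)])
    refine .inl ⟨_, hG, hM.isStable_of_le hbs htf hG hi (fun v => ?_) ?_ (.inl hcen')⟩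
    · by_cases h_a : v = a
      · subst h_a; omega
      by_cases h_c : v = c
      · subst h_c; omega
      by_cases h_d : v = d
      · subst h_d; omega
      rw [hG4 v h_a h_c h_d]
      by_cases h_i : v = i
      · subst h_i; omega
      by_cases h_j : v = j
      · subst h_j; omega
      by_cases h_k : v = k
      · subst h_k; omega
      rw [hF4 v h_i h_j h_k, hE1 v (by tauto)]
    · rw [hG4 i hai.symm hic hid, hF1]
  · obtain ⟨hF, hF1, hF2, hF3, hF4⟩ := hE.insert hpc hEi (hE0 j (by tauto)) (hE0 c (by tauto))
    set M' := Insert.insert {i, j, c} (M.erase {j, c, d}) with hM'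
    have hFd : utility val M' d = 0 := by
      rw [hF4 d hid.symm hjd.symm hcd.symm, hE0 d (by tauto)]
    have hout : ∀ v, v ≠ i → v ≠ j → v ≠ c → v ≠ d → utility val M' v = utility val M v := by
      intro v hvi hvj hvc hvd
      rw [hF4 v hvi hvj hvc, hE1 v (by tauto)]
    have hzero : ∀ v, v ≠ d → utility val M' v = 0 → utility val M v = 0 := by
      intro v hvd hv
      rw [← hout v ?_ ?_ ?_ hvd, hv] <;> rintro rfl <;> omega
    refine .inr ⟨M', d, hF, hFd, ?_, ?_⟩
    · intro a b e hr ha he hb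
      by_contra! hd
      have ha' := hzero a hd.1.symm ha
      have he' := hzero e hd.2.2.symm he
      have hbc : b ≠ c := by
        rintro rfl
        exact hA ⟨a, hr.1, ha'⟩
      have hbj : b ≠ j := by rintro rfl; omega
      have hbi : b ≠ i := by
        rintro rfl
        exact hcen' a e hr ha' he'
      rcases hi a b e hr ha' he' (by rw [← hout b hbi hbj hbc hd.2.1.symm]; exact hb)
        with rfl | rfl | rfl
      · omega
      · exact hbi rfl
      · omega
    · refine (ssubset_iff_of_subset fun v hv => ?_).2 ⟨j, ?_, ?_⟩
      · rw [mem_likingCentres] at hv ⊢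
        obtain ⟨hvN, huv, w, hwi, huw, hvw⟩ := hv
        refine ⟨hvN, ?_, w, ?_, ?_, hvw⟩
        · rw [hout v, huv] <;> rintro rfl
          · omega
          · omega
          · exact hA ⟨w, hvw.symm, huw⟩
          · omega
        · rintro rfl; omega
        · rw [hout w hwi, huw] <;> rintro rfl <;> omega
      · exact mem_likingCentres.2 ⟨hp.1.2.1, hF2, k, hkd,
          by rw [hout k hik.symm hjk.symm hkc hkd, huk], hp.2.1⟩
      · rw [mem_likingCentres]
        rintro ⟨-, h, -⟩
        omega

lemma IsPMatching.exists_stable (hbs : BinSym N val) (htf : TriangleFree N val) {i : A}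
    (hM : IsPMatching N val M) (hui : utility val M i = 0) (hi : BlockedOnlyBy N val M i) :
    ∃ M', IsPMatching N val M' ∧ IsStable N val M' := by
  induction hn : N.card - (likingCentres N val M i).card using Nat.strong_induction_on
    generalizing M i with
  | _ n ih =>
    rcases hM.repair_step hbs htf hui hi with h | ⟨M', i', hM', hui', hi', hlt⟩
    · exact h
    · have h1 := card_lt_card hlt
      have h2 : (likingCentres N val M' i').card ≤ N.card :=
        card_le_card fun v hv => (mem_likingCentres.1 hv).1
      exact ih _ (by omega) hM' hui' hi' rfl

end

/-- If a triangle-free binary symmetric instance contains a repairable `P`-matching,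
then it contains a stable `P`-matching. -/
theorem stable_pmatching_of_repairable [DecidableEq A]
    (N : Finset A) (val : A → A → ℤ)
    (hbs : BinSym N val) (htf : TriangleFree N val)
    (h : ∃ M, IsPMatching N val M ∧ Repairable N val M) :
    ∃ M', IsPMatching N val M' ∧ IsStable N val M' := by
  obtain ⟨M, hM, -, i, -, hui, hblock⟩ := h
  refine hM.exists_stable hbs htf hui fun a b c hp ha hc hb => ?_
  obtain ⟨⟨haN, hbN, hab, v1, v2⟩, ⟨-, hcN, hbc, v3, v4⟩, hac, v5, v6⟩ := hp
  obtain ⟨j, k, heq, -⟩ := hblock a b c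
    ⟨haN, hbN, hcN, hab, hac, hbc, by omega, by omega, by omega⟩
  have hmem : i ∈ ({a, b, c} : Finset A) := by rw [heq]; simp
  simpa using hmem
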